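/- arXiv:1309.6030 — 4 statements merged into one kernel-verified Lean document; each statement's English description precedes it below -/
import Mathlib

section
/- Let u be the fine-scale solution and let u_W be the Galerkin solution on a subspace W ⊆ V. Suppose there are N linear functionals R₁, …, R_N : V → ℝ, linear maps E₁, …, E_N : V → V, positive constants λ₁, …, λ_N, nonnegative constants r₁, …, r_N, nonnegative functions t₁, …, t_N : V → ℝ, and a constant C_err > 0 such that for all v ∈ V: (i) ⟪u − u_W, v⟫ = Σ_{i=1}^{N} R_i(E_i v); (ii) |R_i(x)| ≤ r_i ‖x‖ for all x ∈ V; (iii) ‖E_i v‖ ≤ λ_i^{-1/2} t_i(v); and (iv) Σ_{i=1}^{N} t_i(v)² ≤ C_err ‖v‖². Then ‖u − u_W‖² ≤ C_err Σ_{i=1}^{N} r_i² λ_i^{-1}. -/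
open RealInnerProductSpace

/-!
Testing the residual representation with the error `e` itself, Cauchy–Schwarz over the local
problems gives `‖e‖⁴ ≤ (∑ i, r i ^ 2 / lam i) * (C * ‖e‖²)`, and one factor `‖e‖²` cancels.
-/

lemma le_mul_sum_sq_of_le_sum_mul {ι K : Type*} [CommRing K] [LinearOrder K]
    [IsStrictOrderedRing K] {s : Finset ι} {f g : ι → K} {x C : K} (hC : 0 ≤ C)
    (hx : x ≤ ∑ i ∈ s, f i * g i) (hg : ∑ i ∈ s, g i ^ 2 ≤ C * x) :
    x ≤ C * ∑ i ∈ s, f i ^ 2 := by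
  have hf : 0 ≤ ∑ i ∈ s, f i ^ 2 := Finset.sum_nonneg fun i _ => sq_nonneg (f i)
  rcases le_or_gt x 0 with hx_nonpos | hx_pos
  · exact hx_nonpos.trans (mul_nonneg hC hf)
  · refine le_of_mul_le_mul_right ?_ hx_pos
    calc
      x * x = x ^ 2 := (sq x).symm
      _ ≤ (∑ i ∈ s, f i * g i) ^ 2 := pow_le_pow_left₀ hx_pos.le hx 2
      _ ≤ (∑ i ∈ s, f i ^ 2) * ∑ i ∈ s, g i ^ 2 := Finset.sum_mul_sq_le_sq_mul_sq s f g
      _ ≤ (∑ i ∈ s, f i ^ 2) * (C * x) := mul_le_mul_of_nonneg_left hg hf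
      _ = C * (∑ i ∈ s, f i ^ 2) * x := by ring

lemma norm_sum_le_sum_mul_mul {ι G : Type*} {X : ι → Type*} [SeminormedAddCommGroup G]
    [∀ i, SeminormedAddCommGroup (X i)] {s : Finset ι} {R : ∀ i, X i → G} {x : ∀ i, X i}
    {r c t : ι → ℝ} (hr : ∀ i ∈ s, 0 ≤ r i) (hR : ∀ i ∈ s, ‖R i (x i)‖ ≤ r i * ‖x i‖)
    (hx : ∀ i ∈ s, ‖x i‖ ≤ c i * t i) :
    ‖∑ i ∈ s, R i (x i)‖ ≤ ∑ i ∈ s, r i * c i * t i := by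
  refine norm_sum_le_of_le s fun i hi => ?_
  calc
    ‖R i (x i)‖ ≤ r i * ‖x i‖ := hR i hi
    _ ≤ r i * (c i * t i) := mul_le_mul_of_nonneg_left (hx i hi) (hr i hi)
    _ = r i * c i * t i := (mul_assoc _ _ _).symm

theorem abstract_aposteriori_estimate_general {𝕜 V ι : Type*} {X : ι → Type*} [RCLike 𝕜]
    [SeminormedAddCommGroup V] [InnerProductSpace 𝕜 V] [Fintype ι]
    [∀ i, SeminormedAddCommGroup (X i)] {e : V} {R : ∀ i, X i → 𝕜} {E : ∀ i, V → X i}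
    {lam r : ι → ℝ} {t : ι → V → ℝ} {C : ℝ}
    (hlam : ∀ i, 0 < lam i) (hr : ∀ i, 0 ≤ r i) (hC : 0 ≤ C)
    (hRE : ∀ v, inner 𝕜 e v = ∑ i, R i (E i v))
    (hR : ∀ i x, ‖R i x‖ ≤ r i * ‖x‖)
    (hE : ∀ i v, ‖E i v‖ ≤ (√(lam i))⁻¹ * t i v)
    (ht : ∀ v, ∑ i, t i v ^ 2 ≤ C * ‖v‖ ^ 2) :
    ‖e‖ ^ 2 ≤ C * ∑ i, r i ^ 2 * (lam i)⁻¹ := by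
  have norm_sq_le : ‖e‖ ^ 2 ≤ ∑ i, r i * (√(lam i))⁻¹ * t i e :=
    calc
      ‖e‖ ^ 2 = ‖inner 𝕜 e e‖ := by
        rw [inner_self_eq_norm_sq_to_K, norm_pow, RCLike.norm_ofReal, abs_norm]
      _ = ‖∑ i, R i (E i e)‖ := by rw [hRE]
      _ ≤ ∑ i, r i * (√(lam i))⁻¹ * t i e :=
        norm_sum_le_sum_mul_mul (fun i _ => hr i) (fun i _ => hR i (E i e)) (fun i _ => hE i e)
  calc
    ‖e‖ ^ 2 ≤ C * ∑ i, (r i * (√(lam i))⁻¹) ^ 2 :=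
      le_mul_sum_sq_of_le_sum_mul hC norm_sq_le (ht e)
    _ = C * ∑ i, r i ^ 2 * (lam i)⁻¹ := by
      simp only [mul_pow, inv_pow, Real.sq_sqrt (hlam _).le]

/-- Abstract form of the a-posteriori error estimate (Theorem 4.1): if the
Galerkin error pairs against any `v` as a sum of local residuals `Rᵢ(Eᵢ v)`,
the `Rᵢ` are bounded by `rᵢ`, the local maps satisfy
`‖Eᵢ v‖ ≤ λᵢ^{-1/2} tᵢ(v)` and the local norms satisfy
`Σᵢ tᵢ(v)² ≤ C_err ‖v‖²`, then `‖u - u_W‖² ≤ C_err Σᵢ rᵢ² λᵢ⁻¹`. -/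
theorem abstract_aposteriori_estimate
    {V : Type*} [NormedAddCommGroup V] [InnerProductSpace ℝ V]
    (F : V →ₗ[ℝ] ℝ) (W : Submodule ℝ V) (u uW : V)
    (huW : uW ∈ W)
    (hfine : ∀ v : V, ⟪u, v⟫ = F v)
    (hgal : ∀ w ∈ W, ⟪uW, w⟫ = F w)
    (N : ℕ) (hN : 1 ≤ N)
    (R : Fin N → V →ₗ[ℝ] ℝ) (E : Fin N → V →ₗ[ℝ] V)
    (lam : Fin N → ℝ) (r : Fin N → ℝ) (t : Fin N → V → ℝ)
    (Cerr : ℝ)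
    (hlam : ∀ i, 0 < lam i) (hr : ∀ i, 0 ≤ r i)
    (ht : ∀ i v, 0 ≤ t i v) (hCerr : 0 < Cerr)
    (h1 : ∀ v : V, ⟪u - uW, v⟫ = ∑ i, R i (E i v))
    (h2 : ∀ i, ∀ x : V, |R i x| ≤ r i * ‖x‖)
    (h3 : ∀ i, ∀ v : V, ‖E i v‖ ≤ (Real.sqrt (lam i))⁻¹ * t i v)
    (h4 : ∀ v : V, ∑ i, (t i v) ^ 2 ≤ Cerr * ‖v‖ ^ 2) :
    ‖u - uW‖ ^ 2 ≤ Cerr * ∑ i, (r i) ^ 2 * (lam i)⁻¹ :=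
  abstract_aposteriori_estimate_general hlam hr hCerr.le h1 h2 h3 h4
end

section
/- Let W_m ⊆ W_{m+1} be subspaces of V with Galerkin solutions u_m ∈ W_m and u_{m+1} ∈ W_{m+1}, and define the residual functional R(v) = F(v) − ⟪u_m, v⟫. Let Π : V → V be a linear map whose range is contained in W_{m+1} and which satisfies ‖Π v‖ ≤ C_stab ‖v‖ for all v ∈ V, where C_stab ≥ 0, and suppose S ≥ 0 satisfies |R(v − Π v)| ≤ S ‖v‖ for all v ∈ V. Then |R(v)| ≤ (C_stab ‖u_{m+1} − u_m‖ + S) ‖v‖ for all v ∈ V. -/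
open RealInnerProductSpace

section Residual

variable {𝕜 V : Type*} [RCLike 𝕜] [SeminormedAddCommGroup V] [InnerProductSpace 𝕜 V]

/-- The residual functional `v ↦ F v - ⟪u, v⟫` of an approximation `u` to the representer of `F`.
Mathlib's inner product is linear in its second argument, so this is linear over `ℂ` as well. -/
def galerkinResidual (F : V →ₗ[𝕜] 𝕜) (u : V) : V →ₗ[𝕜] 𝕜 :=
  F - innerₛₗ 𝕜 u

theorem galerkinResidual_apply (F : V →ₗ[𝕜] 𝕜) (u v : V) :
    galerkinResidual F u v = F v - inner 𝕜 u v :=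
  rfl

theorem galerkinResidual_eq_inner_sub {F : V →ₗ[𝕜] 𝕜} {u' w : V} (hw : inner 𝕜 u' w = F w)
    (u : V) : galerkinResidual F u w = inner 𝕜 (u' - u) w := by
  rw [galerkinResidual_apply, inner_sub_left, hw]

theorem norm_galerkinResidual_le {F : V →ₗ[𝕜] 𝕜} {u' w : V} (hw : inner 𝕜 u' w = F w)
    (u : V) : ‖galerkinResidual F u w‖ ≤ ‖u' - u‖ * ‖w‖ := by
  rw [galerkinResidual_eq_inner_sub hw]
  exact norm_inner_le_norm _ _

theorem residual_efficiency_general {F : V →ₗ[𝕜] 𝕜} {W : Submodule 𝕜 V} {u' : V}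
    (hgal : ∀ w ∈ W, inner 𝕜 u' w = F w) (u : V)
    {P : V → V} (hrange : ∀ v, P v ∈ W) {C S : ℝ} (hstab : ∀ v, ‖P v‖ ≤ C * ‖v‖)
    (hres : ∀ v, ‖galerkinResidual F u (v - P v)‖ ≤ S * ‖v‖) (v : V) :
    ‖galerkinResidual F u v‖ ≤ (C * ‖u' - u‖ + S) * ‖v‖ :=
  calc ‖galerkinResidual F u v‖
      = ‖galerkinResidual F u (P v) + galerkinResidual F u (v - P v)‖ := by
        rw [← map_add, add_sub_cancel]
    _ ≤ ‖galerkinResidual F u (P v)‖ + ‖galerkinResidual F u (v - P v)‖ := norm_add_le _ _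
    _ ≤ ‖u' - u‖ * ‖P v‖ + S * ‖v‖ :=
        add_le_add (norm_galerkinResidual_le (hgal _ (hrange v)) u) (hres v)
    _ ≤ ‖u' - u‖ * (C * ‖v‖) + S * ‖v‖ := by gcongr; exact hstab v
    _ = (C * ‖u' - u‖ + S) * ‖v‖ := by ring

end Residual

/-- Abstract content of Lemma 6.1 (efficiency of the residual indicator):
the dual norm of the residual at enrichment level `m` is bounded by the
energy norm of the solution update plus the correction term. -/
theorem residual_efficiency
    {V : Type*} [NormedAddCommGroup V] [InnerProductSpace ℝ V]
    (F : V →ₗ[ℝ] ℝ) (Wm Wm1 : Submodule ℝ V) (hW : Wm ≤ Wm1)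
    (um um1 : V) (hum : um ∈ Wm) (hum1 : um1 ∈ Wm1)
    (hgalm : ∀ w ∈ Wm, ⟪um, w⟫ = F w)
    (hgalm1 : ∀ w ∈ Wm1, ⟪um1, w⟫ = F w)
    (Pr : V →ₗ[ℝ] V) (hrange : ∀ v : V, Pr v ∈ Wm1)
    (Cstab S : ℝ) (hCstab : 0 ≤ Cstab) (hS : 0 ≤ S)
    (hstab : ∀ v : V, ‖Pr v‖ ≤ Cstab * ‖v‖)
    (hres : ∀ v : V, |F (v - Pr v) - ⟪um, v - Pr v⟫| ≤ S * ‖v‖) :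
    ∀ v : V, |F v - ⟪um, v⟫| ≤ (Cstab * ‖um1 - um‖ + S) * ‖v‖ :=
  residual_efficiency_general hgalm1 um hrange hstab hres
end

section
/- Let W_m ⊆ W_{m+1} be subspaces of V with Galerkin solutions u_m ∈ W_m and u_{m+1} ∈ W_{m+1}, and define R_m(w) = F(w) − ⟪u_m, w⟫ and R_{m+1}(w) = F(w) − ⟪u_{m+1}, w⟫. Let Π₁, Π₂ : V → V be linear maps and C_stab, κ, S, M ≥ 0 constants such that for all v ∈ V: ‖Π₂ v‖ ≤ C_stab ‖v‖, ‖Π₁ v − Π₂ v‖ ≤ κ ‖v‖, |R_m(v − Π₁ v)| ≤ S ‖v‖, and |R_m(v)| ≤ M ‖v‖. Then for all v ∈ V, |R_{m+1}(v − Π₂ v)| ≤ ( S + (1 + C_stab) ‖u_{m+1} − u_m‖ + κ M ) ‖v‖. -/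
open RealInnerProductSpace

/-!
Replacing the approximation `u` by `u'` changes the residual by the inner product with `u' - u`,
which Cauchy–Schwarz controls. Replacing `v - p₁` by `v - p₂` adds the residual of `u` at `p₁ - p₂`,
which the dual norm of that residual controls.
-/

section

variable {𝕜 V : Type*} [RCLike 𝕜] [SeminormedAddCommGroup V] [InnerProductSpace 𝕜 V]

/-- The residual `w ↦ F w - ⟪u, w⟫` of an approximation `u` to the solution of the variational
problem `⟪u, w⟫ = F w`, measuring how far `u` is from solving it. It is a plain linear map, since
`F` may be discontinuous. -/
def variationalResidual (F : V →ₗ[𝕜] 𝕜) (u : V) : V →ₗ[𝕜] 𝕜 :=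
  F - innerₛₗ 𝕜 u

theorem variationalResidual_apply (F : V →ₗ[𝕜] 𝕜) (u w : V) :
    variationalResidual F u w = F w - inner 𝕜 u w :=
  rfl

theorem variationalResidual_apply_eq_sub_inner (F : V →ₗ[𝕜] 𝕜) (u u' w : V) :
    variationalResidual F u' w = variationalResidual F u w - inner 𝕜 (u' - u) w := by
  simp only [variationalResidual_apply, inner_sub_left]
  ring

theorem norm_variationalResidual_apply_le (F : V →ₗ[𝕜] 𝕜) (u u' w : V) :
    ‖variationalResidual F u' w‖ ≤ ‖variationalResidual F u w‖ + ‖u' - u‖ * ‖w‖ := by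
  rw [variationalResidual_apply_eq_sub_inner F u u' w]
  exact (norm_sub_le _ _).trans (by gcongr; exact norm_inner_le_norm _ _)

end

theorem norm_sub_le_one_add_mul_norm {E : Type*} [SeminormedAddGroup E] {v p : E} {C : ℝ}
    (hp : ‖p‖ ≤ C * ‖v‖) : ‖v - p‖ ≤ (1 + C) * ‖v‖ :=
  calc
    ‖v - p‖ ≤ ‖v‖ + ‖p‖ := norm_sub_le v p
    _ ≤ ‖v‖ + C * ‖v‖ := by gcongr
    _ = (1 + C) * ‖v‖ := by ring

theorem residual_recursive_estimate_general
    {𝕜 V : Type*} [RCLike 𝕜] [SeminormedAddCommGroup V] [InnerProductSpace 𝕜 V]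
    (F : V →ₗ[𝕜] 𝕜) (u u' : V) {v p₁ p₂ : V} {Cstab κ S M : ℝ} (hM : 0 ≤ M)
    (stable : ‖p₂‖ ≤ Cstab * ‖v‖) (close : ‖p₁ - p₂‖ ≤ κ * ‖v‖)
    (residual_le : ‖variationalResidual F u (v - p₁)‖ ≤ S * ‖v‖)
    (dual_le : ∀ w, ‖variationalResidual F u w‖ ≤ M * ‖w‖) :
    ‖variationalResidual F u' (v - p₂)‖ ≤ (S + (1 + Cstab) * ‖u' - u‖ + κ * M) * ‖v‖ := by
  have projection_change : ‖variationalResidual F u (p₁ - p₂)‖ ≤ M * (κ * ‖v‖) :=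
    (dual_le _).trans (by gcongr)
  have old_residual_le : ‖variationalResidual F u (v - p₂)‖ ≤ S * ‖v‖ + M * (κ * ‖v‖) := by
    rw [← sub_add_sub_cancel v p₁ p₂, map_add]
    exact norm_add_le_of_le residual_le projection_change
  calc
    ‖variationalResidual F u' (v - p₂)‖
      ≤ ‖variationalResidual F u (v - p₂)‖ + ‖u' - u‖ * ‖v - p₂‖ :=
        norm_variationalResidual_apply_le F u u' _
    _ ≤ S * ‖v‖ + M * (κ * ‖v‖) + ‖u' - u‖ * ((1 + Cstab) * ‖v‖) := by
        gcongr
        exact norm_sub_le_one_add_mul_norm stable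
    _ = (S + (1 + Cstab) * ‖u' - u‖ + κ * M) * ‖v‖ := by ring

/-- Abstract content of the recursive estimate of Lemma 6.2 for the
correction terms of the residuals at consecutive enrichment levels. -/
theorem residual_recursive_estimate
    {V : Type*} [NormedAddCommGroup V] [InnerProductSpace ℝ V]
    (F : V →ₗ[ℝ] ℝ) (Wm Wm1 : Submodule ℝ V) (hW : Wm ≤ Wm1)
    (um um1 : V) (hum : um ∈ Wm) (hum1 : um1 ∈ Wm1)
    (hgalm : ∀ w ∈ Wm, ⟪um, w⟫ = F w)
    (hgalm1 : ∀ w ∈ Wm1, ⟪um1, w⟫ = F w)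
    (P1 P2 : V →ₗ[ℝ] V)
    (Cstab kap S M : ℝ)
    (hCstab : 0 ≤ Cstab) (hkap : 0 ≤ kap) (hS : 0 ≤ S) (hM : 0 ≤ M)
    (h1 : ∀ v : V, ‖P2 v‖ ≤ Cstab * ‖v‖)
    (h2 : ∀ v : V, ‖P1 v - P2 v‖ ≤ kap * ‖v‖)
    (h3 : ∀ v : V, |F (v - P1 v) - ⟪um, v - P1 v⟫| ≤ S * ‖v‖)
    (h4 : ∀ v : V, |F v - ⟪um, v⟫| ≤ M * ‖v‖) :
    ∀ v : V, |F (v - P2 v) - ⟪um1, v - P2 v⟫|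
      ≤ (S + (1 + Cstab) * ‖um1 - um‖ + kap * M) * ‖v‖ :=
  fun v => residual_recursive_estimate_general F um um1 hM (h1 v) (h2 v) (h3 v) h4
end

section
/- Let θ ∈ (0,1), L₁ > 0, C_err > 0, τ > 0, δ ≥ 0, L₂ ≥ 0, and ρ ≥ 0 be real numbers satisfying 2 C_err/(τ L₁) + ρ < 1, and set ε = max( 1 − θ²/(L₁ (1 + τ δ L₂)), 2 C_err/(τ L₁) + ρ ). Then 0 < ε < 1, and for any nonnegative real numbers a, a', s, s' satisfying (i) a' ≤ (1 − θ²/L₁) a + (2 C_err/L₁) s, and (ii) s' ≤ ρ s + δ L₂ (a − a'), one has a' + (τ/(1 + τ δ L₂)) s' ≤ ε ( a + (τ/(1 + τ δ L₂)) s ). -/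
lemma mul_add_mul_le_max_mul_add {R : Type*} [Semiring R] [LinearOrder R] [IsOrderedRing R]
    {x y : R} (p q : R) (hx : 0 ≤ x) (hy : 0 ≤ y) :
    p * x + q * y ≤ max p q * (x + y) :=
  calc p * x + q * y
      ≤ max p q * x + max p q * y := by gcongr <;> simp
    _ = max p q * (x + y) := (mul_add _ _ _).symm

section LinearOrderedField

variable {K : Type*} [Field K] [LinearOrder K] [IsStrictOrderedRing K] {α β κ τ ρ : K}

/-- Adding `τ` times the recursion for `s'` to the bound for `a'` and moving `τ * κ * a'` to the
left gives `a'` the coefficient `1 + τ * κ`; this is where the weight `τ / (1 + τ * κ)` comes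
from. -/
lemma add_weight_mul_le_of_coupled_le {a a' s s' : K} (hτ : 0 < τ) (hκ : 0 < 1 + τ * κ)
    (ha' : a' ≤ (1 - α) * a + β * s) (hs' : s' ≤ ρ * s + κ * (a - a')) :
    a' + τ / (1 + τ * κ) * s' ≤
      (1 - α / (1 + τ * κ)) * a + (β / τ + ρ) * (τ / (1 + τ * κ) * s) := by
  have combined : (1 + τ * κ) * a' + τ * s' ≤ (1 + τ * κ - α) * a + (β + τ * ρ) * s := by
    linarith [mul_le_mul_of_nonneg_left hs' hτ.le]
  calc a' + τ / (1 + τ * κ) * s'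
      = ((1 + τ * κ) * a' + τ * s') / (1 + τ * κ) := by field_simp
    _ ≤ ((1 + τ * κ - α) * a + (β + τ * ρ) * s) / (1 + τ * κ) := by gcongr
    _ = (1 - α / (1 + τ * κ)) * a + (β / τ + ρ) * (τ / (1 + τ * κ) * s) := by
      field_simp

theorem adaptive_contraction_general (hα : 0 < α) (hβ : 0 < β) (hκ : 0 ≤ κ) (hτ : 0 < τ)
    (hρ : 0 ≤ ρ) (hsum : β / τ + ρ < 1) :
    (0 < max (1 - α / (1 + τ * κ)) (β / τ + ρ) ∧ max (1 - α / (1 + τ * κ)) (β / τ + ρ) < 1) ∧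
    ∀ a a' s s' : K, 0 ≤ a → 0 ≤ s →
      a' ≤ (1 - α) * a + β * s → s' ≤ ρ * s + κ * (a - a') →
      a' + τ / (1 + τ * κ) * s' ≤
        max (1 - α / (1 + τ * κ)) (β / τ + ρ) * (a + τ / (1 + τ * κ) * s) := by
  have hden : 0 < 1 + τ * κ := by positivity
  refine ⟨⟨lt_max_of_lt_right (by positivity), max_lt (sub_lt_self 1 (by positivity)) hsum⟩, ?_⟩
  intro a a' s s' ha hs ha' hs'
  exact (add_weight_mul_le_of_coupled_le hτ hden ha' hs').trans
    (mul_add_mul_le_max_mul_add _ _ ha (by positivity))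

end LinearOrderedField

/-- Arithmetic core of Theorem 4.2 (contraction property of the adaptive
enrichment algorithm): with
`ε = max (1 - θ²/(L₁(1 + τδL₂))) (2C_err/(τL₁) + ρ)` one has `0 < ε < 1`,
and the contraction
`a' + (τ/(1+τδL₂)) s' ≤ ε (a + (τ/(1+τδL₂)) s)` holds whenever the two
one-step inequalities hold. -/
theorem adaptive_contraction
    (θ L1 Cerr τ δ L2 ρ : ℝ)
    (hθ0 : 0 < θ) (hθ1 : θ < 1) (hL1 : 0 < L1) (hCerr : 0 < Cerr)
    (hτ : 0 < τ) (hδ : 0 ≤ δ) (hL2 : 0 ≤ L2) (hρ : 0 ≤ ρ)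
    (hsum : 2 * Cerr / (τ * L1) + ρ < 1) :
    (0 < max (1 - θ ^ 2 / (L1 * (1 + τ * δ * L2))) (2 * Cerr / (τ * L1) + ρ) ∧
      max (1 - θ ^ 2 / (L1 * (1 + τ * δ * L2))) (2 * Cerr / (τ * L1) + ρ) < 1) ∧
    ∀ a a' s s' : ℝ, 0 ≤ a → 0 ≤ a' → 0 ≤ s → 0 ≤ s' →
      a' ≤ (1 - θ ^ 2 / L1) * a + (2 * Cerr / L1) * s →
      s' ≤ ρ * s + δ * L2 * (a - a') →
      a' + (τ / (1 + τ * δ * L2)) * s'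
        ≤ max (1 - θ ^ 2 / (L1 * (1 + τ * δ * L2))) (2 * Cerr / (τ * L1) + ρ) *
            (a + (τ / (1 + τ * δ * L2)) * s) := by
  have general := adaptive_contraction_general (α := θ ^ 2 / L1) (β := 2 * Cerr / L1)
    (κ := δ * L2) (by positivity) (by positivity) (mul_nonneg hδ hL2) hτ hρ
    (by rwa [div_div, mul_comm L1])
  rw [div_div, div_div, mul_comm L1 τ, ← mul_assoc τ] at general
  exact ⟨general.1, fun a a' s s' ha _ hs _ => general.2 a a' s s' ha hs⟩
end
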